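/- If (λ, σ) is the pair (Dyck path, linear extension) arising from the sequence (p_1,…,p_n) with 0 ≤ p_i ≤ 2(i−1), then the descent set of σ equals the descent set of the min-word of match(p_1,…,p_n): DES(σ) = DES(min-word(match(p_1,…,p_n))). In particular, dis(DTR(p_1,…,p_n)) = des(min-word(match(p_1,…,p_n))). -/

import Mathlib

open Finset

noncomputable section

/-- A Dyck path of order `n`: a word of `2n` steps (`true` = up-step `(+1,+1)`,
`false` = down-step `(+1,-1)`) from `(-n,0)` to `(n,0)` staying weakly above the x-axis. -/
structure DyckPath (n : ℕ) where
  step : Fin (2 * n) → Bool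
  balanced : (Finset.univ.filter fun i => step i = true).card = n
  nonneg : ∀ k : ℕ, k ≤ 2 * n →
    (Finset.univ.filter fun i : Fin (2 * n) => (i : ℕ) < k ∧ step i = false).card ≤
      (Finset.univ.filter fun i : Fin (2 * n) => (i : ℕ) < k ∧ step i = true).card

namespace DyckPath

/-- Height of the path above column `x` (columns run from `-n` to `n`). -/
def ht {n : ℕ} (P : DyckPath n) (x : ℤ) : ℤ :=
  ((Finset.univ.filter fun i : Fin (2 * n) => ((i : ℕ) : ℤ) < x + n ∧ P.step i = true).card : ℤ) -
    ((Finset.univ.filter fun i : Fin (2 * n) => ((i : ℕ) : ℤ) < x + n ∧ P.step i = false).card : ℤ)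

/-- Height of the path at lattice point number `k`, `0 ≤ k ≤ 2n`
(point `k` lies at column `k - n`). -/
def pt {n : ℕ} (P : DyckPath n) (k : ℕ) : ℤ := P.ht ((k : ℤ) - n)

end DyckPath

/-- `IsChord P p q`: the up-step at (0-indexed) position `p` matches the down-step at
position `q`, forming a chord of `P`. -/
def IsChord {n : ℕ} (P : DyckPath n) (p q : ℕ) : Prop :=
  p < q ∧ q < 2 * n ∧
    (∃ hp : p < 2 * n, P.step ⟨p, hp⟩ = true) ∧
    (∃ hq : q < 2 * n, P.step ⟨q, hq⟩ = false) ∧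
    P.pt (q + 1) = P.pt p ∧
    ∀ m : ℕ, p < m → m ≤ q → P.pt p < P.pt m

/-- A natural labeling of the chord poset of `P`: the chord labeled `i` has its up-step at
(0-indexed) position `l i` and matching down-step at position `r i`; distinct labels name
distinct chords; and if one chord is nested inside another it receives a larger label. -/
structure ChordLabeling {n : ℕ} (P : DyckPath n) where
  l : Fin n → ℕ
  r : Fin n → ℕ
  chord : ∀ i, IsChord P (l i) (r i)
  inj : Function.Injective l
  natural : ∀ i j : Fin n, l j < l i → r i < r j → j < i

/-- The length of the chord labeled `i`: the number of up steps of `P` between and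
including its two endpoints. -/
def chordLen {n : ℕ} {P : DyckPath n} (C : ChordLabeling P) (i : Fin n) : ℕ :=
  (Finset.univ.filter fun m : Fin (2 * n) =>
    C.l i ≤ (m : ℕ) ∧ (m : ℕ) ≤ C.r i ∧ P.step m = true).card

/-- The growth sequence `p_1, …, p_n` associated with a natural chord labeling:
`p i = #{j<i : l j < l i} + #{j<i : r j < l i}`. -/
def seqOf {n : ℕ} {P : DyckPath n} (C : ChordLabeling P) (i : Fin n) : ℕ :=
  (Finset.univ.filter fun j : Fin n => j < i ∧ C.l j < C.l i).card +
    (Finset.univ.filter fun j : Fin n => j < i ∧ C.r j < C.l i).card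

/-- `σ` is the standardization of the word `w` (with distinct letters). -/
def IsStandardization {n : ℕ} (w : Fin n → ℕ) (σ : Equiv.Perm (Fin n)) : Prop :=
  ∀ i j : Fin n, σ i < σ j ↔ w i < w j

/-- `σ ∈ 𝓛(P_λ)`: σ is `L₀ ∘ L⁻¹` for some natural labeling `L` of the chord poset,
equivalently the standardization of the word of left endpoints of a natural labeling. -/
def LinExt {n : ℕ} (P : DyckPath n) (σ : Equiv.Perm (Fin n)) : Prop :=
  ∃ C : ChordLabeling P, IsStandardization C.l σ

/-- Successor index in `Fin n` (used only under the guard `i+1 < n`). -/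
def nextIdx {n : ℕ} (i : Fin n) : Fin n := ⟨((i : ℕ) + 1) % n, Nat.mod_lt _ i.pos⟩

/-- Descent set of a word: positions `i` with `i+1 < n` and `w i > w (i+1)`. -/
def descentFinset {n : ℕ} (w : Fin n → ℕ) : Finset (Fin n) :=
  Finset.univ.filter fun i => (i : ℕ) + 1 < n ∧ w (nextIdx i) < w i

/-- Number of inversions of a word. -/
def wordInv {n : ℕ} (w : Fin n → ℕ) : ℕ :=
  (Finset.univ.filter fun p : Fin n × Fin n => p.1 < p.2 ∧ w p.2 < w p.1).card

/-- The word of values of a permutation. -/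
def permWord {n : ℕ} (σ : Equiv.Perm (Fin n)) : Fin n → ℕ := fun i => (σ i : ℕ)

/-- inv(σ). -/
def permInv {n : ℕ} (σ : Equiv.Perm (Fin n)) : ℕ := wordInv (permWord σ)

/-- des(σ). -/
def permDes {n : ℕ} (σ : Equiv.Perm (Fin n)) : ℕ := (descentFinset (permWord σ)).card

/-- `REM_i(w) = {k > i : w i > w k > w (i+1)}`, the right embraced numbers. -/
def remSet {n : ℕ} (w : Fin n → ℕ) (i : Fin n) : Finset (Fin n) :=
  Finset.univ.filter fun k => i < k ∧ w (nextIdx i) < w k ∧ w k < w i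

/-- desdif(σ) = Σ_{i ∈ DES σ} (σ i − σ (i+1)). -/
def desdif {n : ℕ} (σ : Equiv.Perm (Fin n)) : ℕ :=
  ∑ i ∈ descentFinset (permWord σ), (permWord σ i - permWord σ (nextIdx i))

/-- res(σ) = Σ_{i ∈ DES σ} #{k < i : σ i > σ k > σ (i+1)}. -/
def resStat {n : ℕ} (σ : Equiv.Perm (Fin n)) : ℕ :=
  ∑ i ∈ descentFinset (permWord σ),
    (Finset.univ.filter fun k : Fin n =>
      k < i ∧ permWord σ (nextIdx i) < permWord σ k ∧ permWord σ k < permWord σ i).card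

/-- The Mahonian statistic mad(σ) = desdif(σ) + res(σ). -/
def mad {n : ℕ} (σ : Equiv.Perm (Fin n)) : ℕ := desdif σ + resStat σ

/-- σ avoids the pattern 231. -/
def Avoids231 {n : ℕ} (σ : Equiv.Perm (Fin n)) : Prop :=
  ¬∃ i j k : Fin n, i < j ∧ j < k ∧ σ k < σ i ∧ σ i < σ j

/-- The boxes of the skew shape `lam/mu` (with `mu` weakly above `lam`), each box
recorded by its bottom corner (a lattice point `(x, z)` with `z ≡ x + n (mod 2)`). -/
def skewCells {n : ℕ} (lam mu : DyckPath n) : Finset (ℤ × ℤ) :=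
  ((Finset.Icc (-(n : ℤ)) n) ×ˢ (Finset.Icc (0 : ℤ) n)).filter fun c =>
    lam.ht c.1 ≤ c.2 ∧ c.2 + 2 ≤ mu.ht c.1 ∧ (c.2 - c.1 - n) % 2 = 0

/-- A Dyck tile, recorded by the set of bottom corners of its boxes: these form
a Dyck-path shape, i.e. a ±1-step lattice path whose two ends are lowest. -/
def IsDyckTile (t : Finset (ℤ × ℤ)) : Prop :=
  ∃ (a b : ℤ) (f : ℤ → ℤ), a ≤ b ∧
    (∀ x : ℤ, a ≤ x → x < b → f (x + 1) = f x + 1 ∨ f (x + 1) = f x - 1) ∧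
    f b = f a ∧ (∀ x : ℤ, a ≤ x → x ≤ b → f a ≤ f x) ∧
    t = (Finset.Icc a b).image fun x => (x, f x)

/-- A Dyck tiling of order `n`: a tiling of the skew shape between two Dyck paths of
order `n` by Dyck tiles. -/
structure DyckTiling (n : ℕ) where
  lower : DyckPath n
  upper : DyckPath n
  below : ∀ x : ℤ, lower.ht x ≤ upper.ht x
  tiles : Finset (Finset (ℤ × ℤ))
  isDyck : ∀ t ∈ tiles, IsDyckTile t
  disj : ∀ t ∈ tiles, ∀ u ∈ tiles, t ≠ u → Disjoint t u
  cover : tiles.biUnion id = skewCells lower upper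

namespace DyckTiling

/-- Number of boxes of the skew shape. -/
def area {n : ℕ} (T : DyckTiling n) : ℕ := (skewCells T.lower T.upper).card

/-- Number of tiles. -/
def numTiles {n : ℕ} (T : DyckTiling n) : ℕ := T.tiles.card

/-- art(T) = (area(T) + tiles(T)) / 2. -/
def art {n : ℕ} (T : DyckTiling n) : ℕ := (T.area + T.numTiles) / 2

/-- dis(T): the number of step positions where the lower path steps down while the
upper path steps up. -/
def dis {n : ℕ} (T : DyckTiling n) : ℕ :=
  (Finset.univ.filter fun i : Fin (2 * n) =>
    T.lower.step i = false ∧ T.upper.step i = true).card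

/-- Cover-inclusiveness: whenever a tile has a box strictly above a box of another tile,
its horizontal extent is contained in that of the other tile. -/
def CoverInclusive {n : ℕ} (T : DyckTiling n) : Prop :=
  ∀ t ∈ T.tiles, ∀ u ∈ T.tiles,
    (∃ p ∈ t, ∃ q ∈ u, (p : ℤ × ℤ).1 = (q : ℤ × ℤ).1 ∧ (q : ℤ × ℤ).2 < (p : ℤ × ℤ).2) →
    ∀ p ∈ t, ∃ y : ℤ, ((p : ℤ × ℤ).1, y) ∈ u

end DyckTiling

/-- Height function of the spread at column `s` of a Dyck path. -/
def spreadHt {n : ℕ} (P : DyckPath n) (s x : ℤ) : ℤ :=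
  if x < s then P.ht (x + 1) else if x = s then P.ht s + 1 else P.ht (x - 1)

/-- Spread of a tile at column `s`: points left of `s` move left, points right of `s`
move right, and a point at column `s` is duplicated upward. -/
def spreadTile (s : ℤ) (t : Finset (ℤ × ℤ)) : Finset (ℤ × ℤ) :=
  ((t.filter fun p => p.1 ≤ s).image fun p => (p.1 - 1, p.2)) ∪
    ((t.filter fun p => p.1 = s).image fun p => (p.1, p.2 + 1)) ∪
    ((t.filter fun p => s ≤ p.1).image fun p => (p.1 + 1, p.2))

/-- Spread of a set of tiles at column `s`. -/
def spreadTiles (s : ℤ) (ts : Finset (Finset (ℤ × ℤ))) : Finset (Finset (ℤ × ℤ)) :=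
  ts.image (spreadTile s)

/-- Column `c` is eligible for a tiling with upper-boundary height function `h` and
tile set `ts`: the upper boundary has an up step ending at column `c`, and its point at
column `c` is not the top corner of a one-box tile. -/
def EligibleCol (h : ℤ → ℤ) (ts : Finset (Finset (ℤ × ℤ))) (c : ℤ) : Prop :=
  h c = h (c - 1) + 1 ∧ ({(c, h c - 2)} : Finset (ℤ × ℤ)) ∉ ts

/-- `T'` is the result of the strip-grow map applied to `(T, s)`: spread `T` at `s` and
add a one-box tile on each up step of the (spread) upper boundary starting at a column
`≥ s` (i.e. strictly to the right of column `s`). -/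
def StripGrowRel {n : ℕ} (T : DyckTiling n) (s : ℤ) (T' : DyckTiling (n + 1)) : Prop :=
  (∀ x : ℤ, T'.lower.ht x = spreadHt T.lower s x) ∧
  (∀ x : ℤ, T'.upper.ht x =
    if s ≤ x ∧ spreadHt T.upper s (x + 1) = spreadHt T.upper s x + 1 then
      spreadHt T.upper s x + 2
    else spreadHt T.upper s x) ∧
  T'.tiles = spreadTiles s T.tiles ∪
    ((Finset.Icc s (n : ℤ)).filter fun x =>
        spreadHt T.upper s (x + 1) = spreadHt T.upper s x + 1).image
      (fun x => ({(x, spreadHt T.upper s x)} : Finset (ℤ × ℤ)))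

/-- `T'` is the result of the ribbon-grow map applied to `(T, s)`: spread `T` at `s`,
and if the special column `Q` of the spread tiling is strictly right of `s`, add a
ribbon of one-box tiles at all columns strictly between `s` and `Q`. -/
def RibbonGrowRel {n : ℕ} (T : DyckTiling n) (s : ℤ) (T' : DyckTiling (n + 1)) : Prop :=
  (∀ x : ℤ, T'.lower.ht x = spreadHt T.lower s x) ∧
  ∃ Q : ℤ,
    EligibleCol (spreadHt T.upper s) (spreadTiles s T.tiles) Q ∧
    (∀ c : ℤ, EligibleCol (spreadHt T.upper s) (spreadTiles s T.tiles) c → c ≤ Q) ∧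
    (∀ x : ℤ, T'.upper.ht x =
      if s < x ∧ x < Q then spreadHt T.upper s x + 2 else spreadHt T.upper s x) ∧
    T'.tiles = spreadTiles s T.tiles ∪
      (Finset.Ioo s Q).image (fun x => ({(x, spreadHt T.upper s x)} : Finset (ℤ × ℤ)))

/-- `s` is the special column of `T`: its rightmost eligible column. -/
def SpecialCol {n : ℕ} (T : DyckTiling n) (s : ℤ) : Prop :=
  EligibleCol T.upper.ht T.tiles s ∧ ∀ c : ℤ, EligibleCol T.upper.ht T.tiles c → c ≤ s

/-- In the strip-shrink map applied to `T'` with special column `s`, a one-box tile is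
removed at column `x`: `x` is right of `s` and there is a one-box tile there that is
part of an up step of the upper boundary. -/
def StripRemovedAt {n : ℕ} (T' : DyckTiling n) (s x : ℤ) : Prop :=
  s < x ∧ T'.upper.ht x = T'.upper.ht (x - 1) + 1 ∧
    ({(x, T'.upper.ht x - 2)} : Finset (ℤ × ℤ)) ∈ T'.tiles

instance {n : ℕ} (T' : DyckTiling n) (s x : ℤ) : Decidable (StripRemovedAt T' s x) := by
  unfold StripRemovedAt; infer_instance

/-- `(T, s)` is the result of the strip-shrink map applied to `T'`: `s` is the special
column of `T'`; all one-box tiles right of `s` lying on up steps of the upper boundary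
are removed; and the result is the spread of `T` at `s`. -/
def StripShrinkRel {n : ℕ} (T' : DyckTiling (n + 1)) (T : DyckTiling n) (s : ℤ) : Prop :=
  SpecialCol T' s ∧
  (∀ x : ℤ, spreadHt T.lower s x = T'.lower.ht x) ∧
  (∀ x : ℤ, spreadHt T.upper s x =
    if StripRemovedAt T' s x then T'.upper.ht x - 2 else T'.upper.ht x) ∧
  spreadTiles s T.tiles =
    T'.tiles \ (((Finset.Ioc s ((n : ℤ) + 1)).filter fun x => StripRemovedAt T' s x).image
      fun x => ({(x, T'.upper.ht x - 2)} : Finset (ℤ × ℤ)))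

/-- `(T, s)` is the result of the ribbon-shrink map applied to `T'`: `s` is the special
column of `T'`; the maximal run of topmost one-box tiles in columns `s+1, s+2, …` is
removed; and the result is the spread of `T` at `s`. -/
def RibbonShrinkRel {n : ℕ} (T' : DyckTiling (n + 1)) (T : DyckTiling n) (s : ℤ) : Prop :=
  SpecialCol T' s ∧
  ∃ r : ℤ, s < r ∧
    (∀ x : ℤ, s < x → x < r → ({(x, T'.upper.ht x - 2)} : Finset (ℤ × ℤ)) ∈ T'.tiles) ∧
    ({(r, T'.upper.ht r - 2)} : Finset (ℤ × ℤ)) ∉ T'.tiles ∧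
    (∀ x : ℤ, spreadHt T.lower s x = T'.lower.ht x) ∧
    (∀ x : ℤ, spreadHt T.upper s x =
      if s < x ∧ x < r then T'.upper.ht x - 2 else T'.upper.ht x) ∧
    spreadTiles s T.tiles =
      T'.tiles \ ((Finset.Ioo s r).image fun x => ({(x, T'.upper.ht x - 2)} : Finset (ℤ × ℤ)))

/-- `IsDTS n p T`: `T` is the Dyck tiling `DTS(p_1, …, p_n)` (indices 0-based, so the
growth column for step `i` is `p i - i`). -/
inductive IsDTS : (n : ℕ) → (Fin n → ℕ) → DyckTiling n → Prop where
  | nil (p : Fin 0 → ℕ) (T : DyckTiling 0) : IsDTS 0 p T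
  | cons (n : ℕ) (p : Fin (n + 1) → ℕ) (T : DyckTiling n) (T' : DyckTiling (n + 1)) :
      IsDTS n (fun i => p i.castSucc) T →
      StripGrowRel T ((p (Fin.last n) : ℤ) - n) T' → IsDTS (n + 1) p T'

/-- `IsDTR n p T`: `T` is the Dyck tiling `DTR(p_1, …, p_n)`. -/
inductive IsDTR : (n : ℕ) → (Fin n → ℕ) → DyckTiling n → Prop where
  | nil (p : Fin 0 → ℕ) (T : DyckTiling 0) : IsDTR 0 p T
  | cons (n : ℕ) (p : Fin (n + 1) → ℕ) (T : DyckTiling n) (T' : DyckTiling (n + 1)) :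
      IsDTR n (fun i => p i.castSucc) T →
      RibbonGrowRel T ((p (Fin.last n) : ℤ) - n) T' → IsDTR (n + 1) p T'

/-- `T = DTS(λ, σ)`. -/
def IsDTSof {n : ℕ} (lam : DyckPath n) (σ : Equiv.Perm (Fin n)) (T : DyckTiling n) : Prop :=
  ∃ C : ChordLabeling lam, IsStandardization C.l σ ∧ IsDTS n (seqOf C) T

/-- `T = DTR(λ, σ)`. -/
def IsDTRof {n : ℕ} (lam : DyckPath n) (σ : Equiv.Perm (Fin n)) (T : DyckTiling n) : Prop :=
  ∃ C : ChordLabeling lam, IsStandardization C.l σ ∧ IsDTR n (seqOf C) T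

/-- Increment `a` if it exceeds `p`. -/
def bump (p a : ℕ) : ℕ := if p < a then a + 1 else a

/-- The perfect matching `match(p_1, …, p_n)` of `{1, …, 2n}`. -/
def matchSeq : (n : ℕ) → (Fin n → ℕ) → Finset (ℕ × ℕ)
  | 0, _ => ∅
  | n + 1, p =>
    ((matchSeq n fun i => p i.castSucc).image fun q =>
      (bump (p (Fin.last n)) q.1, bump (p (Fin.last n)) q.2)) ∪
      {(p (Fin.last n) + 1, 2 * (n + 1))}

/-- The number of nestings of a matching: pairs `(a,b)`, `(c,d)` with `c < a < b < d`. -/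
def nestings (M : Finset (ℕ × ℕ)) : ℕ :=
  ((M ×ˢ M).filter fun q => q.2.1 < q.1.1 ∧ q.1.1 < q.1.2 ∧ q.1.2 < q.2.2).card

/-- `w` is the min-word of `M`: the list of the smaller elements of the pairs of `M`,
sorted by the larger elements. -/
def IsMinWord (n : ℕ) (M : Finset (ℕ × ℕ)) (w : Fin n → ℕ) : Prop :=
  ∃ b : Fin n → ℕ, StrictMono b ∧ (∀ i, w i < b i) ∧
    M = Finset.univ.image fun i => (w i, b i)

/-- The number of tiles of `T` containing boxes over both endpoint columns of the
chord with endpoints at step positions `p < q`. -/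
def chordTileCount {n : ℕ} (T : DyckTiling n) (p q : ℕ) : ℕ :=
  (T.tiles.filter fun t =>
    (∃ c ∈ t, (c : ℤ × ℤ).1 = (p : ℤ) + 1 - n) ∧ (∃ c ∈ t, (c : ℤ × ℤ).1 = (q : ℤ) - n)).card

/-- A Dyck tableau of order `n` over the zigzag path `Z` of order `n+1`: a skew shape
`Z/μ` with `n` dots, one in each column of the skew shape through a valley of `Z`. -/
structure DyckTableau (n : ℕ) (Z : DyckPath (n + 1)) where
  upper : DyckPath (n + 1)
  below : ∀ x : ℤ, Z.ht x ≤ upper.ht x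
  dots : Finset (ℤ × ℤ)
  sub : dots ⊆ skewCells Z upper
  card_dots : dots.card = n
  valley : ∀ x : ℤ, Z.ht (x - 1) = Z.ht x + 1 → Z.ht (x + 1) = Z.ht x + 1 →
    (dots.filter fun c => c.1 = x).card = 1

/-- The `q`-integer `[m]_q = 1 + q + ⋯ + q^(m-1)` as a polynomial. -/
def qint (m : ℕ) : Polynomial ℤ := ∑ i ∈ Finset.range m, Polynomial.X ^ i

/-- The `q`-factorial `[n]_q!`. -/
def qfact (n : ℕ) : Polynomial ℤ := ∏ i ∈ Finset.range n, qint (i + 1)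
/-!
All three descent counts are the number of weak descents `p (i + 1) ≤ p i` of the growth sequence.

* If `l (i + 1) < l i`, every label counted by `p (i + 1)` is counted by `p i`, whereas if
  `l i < l (i + 1)`, the label `i` itself is counted only by `p (i + 1)`.
* The pairs of `match` are created in the order of their larger elements, and creating a pair keeps
  the relative order of the older endpoints. So entries `i` and `i + 1` of the min-word compare as
  they do when the later of them is created, which is how `p i` and `p (i + 1)` compare.
* Spreading a tiling moves its steps apart and inserts an up step and a down step into both
  boundaries, which preserves `dis`. A ribbon from column `s` to column `Q` turns the upper step out
  of `s` up and the upper step into `Q` down. The lower path goes down out of `s` and up into `Q`,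
  so `dis` grows by one exactly when there is a ribbon. The special column after a growth at `s` is
  `s` itself, hence there is a ribbon exactly when the next growth column is smaller than `s`, and
  `p (i + 1) - (i + 1) < p i - i` says `p (i + 1) ≤ p i`.
-/

section WeakDescents

/-- The positions `i` of a word with `i + 1 < n` and `p (i + 1) ≤ p i`: the descents of `p`, with
ties counted. -/
def weakDescentFinset {n : ℕ} (p : Fin n → ℕ) : Finset (Fin n) :=
  univ.filter fun i => (i : ℕ) + 1 < n ∧ p (nextIdx i) ≤ p i

lemma covBy_nextIdx {n : ℕ} {i : Fin n} (h : (i : ℕ) + 1 < n) : i ⋖ nextIdx i := by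
  simp [nextIdx, Nat.mod_eq_of_lt h]

lemma descentFinset_eq_weakDescentFinset {n : ℕ} {w p : Fin n → ℕ}
    (h : ∀ i j, i ⋖ j → (w j < w i ↔ p j ≤ p i)) : descentFinset w = weakDescentFinset p :=
  filter_congr fun _ _ => and_congr_right fun hi => h _ _ (covBy_nextIdx hi)

lemma card_weakDescentFinset {n : ℕ} (p : Fin (n + 1) → ℕ) :
    (weakDescentFinset p).card = ∑ i : Fin n, if p i.succ ≤ p i.castSucc then 1 else 0 := by
  have hnext (i : Fin n) : nextIdx i.castSucc = i.succ := by ext; simp [nextIdx]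
  simp [weakDescentFinset, card_filter, Fin.sum_univ_castSucc, hnext, -sum_boole]

lemma card_weakDescentFinset_castSucc {n : ℕ} (p : Fin (n + 2) → ℕ) :
    (weakDescentFinset p).card = (weakDescentFinset fun i : Fin (n + 1) => p i.castSucc).card +
      if p (Fin.last (n + 1)) ≤ p (Fin.last n).castSucc then 1 else 0 := by
  simp only [card_weakDescentFinset, Fin.sum_univ_castSucc, Fin.succ_castSucc, Fin.succ_last]

end WeakDescents

section GrowthSequence

variable {n : ℕ} {l r : Fin n → ℕ} {i j : Fin n}

/-- The growth sequence of a labeled family of intervals `[l i, r i]`, not necessarily the chords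
of a Dyck path; `seqOf C` is by definition `growthSeq C.l C.r`. -/
def growthSeq (l r : Fin n → ℕ) (i : Fin n) : ℕ :=
  (univ.filter fun k : Fin n => k < i ∧ l k < l i).card +
    (univ.filter fun k : Fin n => k < i ∧ r k < l i).card

lemma growthSeq_lt_of_lt (hij : i < j) (hl : l i < l j) :
    growthSeq l r i < growthSeq l r j := by
  refine Nat.add_lt_add_of_lt_of_le (card_lt_card ?_) (card_le_card fun k => ?_)
  · rw [ssubset_iff_of_subset fun k => by simp only [mem_filter_univ]; omega]
    exact ⟨i, by simp [hij, hl], by simp⟩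
  · simp only [mem_filter_univ]
    omega

lemma growthSeq_le_of_covBy (hij : i ⋖ j) (hlr : l i ≤ r i) (hl : l j < l i) :
    growthSeq l r j ≤ growthSeq l r i := by
  refine Nat.add_le_add ?_ ?_ <;> refine card_le_card fun k => ?_ <;>
    simp only [mem_filter_univ, hij.lt_iff_le_left] <;> rintro ⟨hk, hlk⟩ <;>
    obtain rfl | hk := hk.eq_or_lt <;> omega

lemma growthSeq_le_iff_of_covBy (hij : i ⋖ j) (hlr : l i ≤ r i) (hne : l i ≠ l j) :
    growthSeq l r j ≤ growthSeq l r i ↔ l j < l i := by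
  refine ⟨fun h => ?_, growthSeq_le_of_covBy hij hlr⟩
  by_contra! hl
  exact h.not_gt (growthSeq_lt_of_lt hij.lt (hl.lt_of_ne hne))

lemma IsStandardization.injective {w : Fin n → ℕ} {σ : Equiv.Perm (Fin n)}
    (hσ : IsStandardization w σ) : Function.Injective w := fun i j h =>
  σ.injective <| le_antisymm (not_lt.1 <| (hσ j i).not.2 h.not_gt)
    (not_lt.1 <| (hσ i j).not.2 h.not_lt)

lemma IsStandardization.descentFinset_permWord {σ : Equiv.Perm (Fin n)}
    (hσ : IsStandardization l σ) (hlr : ∀ i, l i ≤ r i) :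
    descentFinset (permWord σ) = weakDescentFinset (growthSeq l r) :=
  descentFinset_eq_weakDescentFinset fun i j hij => by
    rw [growthSeq_le_iff_of_covBy hij (hlr i) (hσ.injective.ne hij.ne), ← hσ]
    rfl

end GrowthSequence

section MinWord

lemma bump_lt_bump_iff {p a b : ℕ} : bump p a < bump p b ↔ a < b := by
  unfold bump
  split_ifs <;> omega

lemma bump_le_add_one (p a : ℕ) : bump p a ≤ a + 1 := by
  unfold bump
  split_ifs <;> omega

/-- The pairs of `match(p_1, …, p_n)`, indexed by the step at which they are adjoined. -/
def matchPair : (n : ℕ) → (Fin n → ℕ) → Fin n → ℕ × ℕ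
  | 0, _ => Fin.elim0
  | n + 1, p =>
    Fin.snoc (α := fun _ => ℕ × ℕ)
      (fun i => (matchPair n (fun i => p i.castSucc) i).map
        (bump (p (Fin.last n))) (bump (p (Fin.last n))))
      (p (Fin.last n) + 1, 2 * (n + 1))

@[simp]
lemma matchPair_last {n : ℕ} (p : Fin (n + 1) → ℕ) :
    matchPair (n + 1) p (Fin.last n) = (p (Fin.last n) + 1, 2 * (n + 1)) := by
  simp [matchPair]

@[simp]
lemma matchPair_castSucc {n : ℕ} (p : Fin (n + 1) → ℕ) (i : Fin n) :
    matchPair (n + 1) p i.castSucc = (matchPair n (fun i => p i.castSucc) i).map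
      (bump (p (Fin.last n))) (bump (p (Fin.last n))) := by
  simp [matchPair]

lemma matchSeq_eq_image_matchPair {n : ℕ} (p : Fin n → ℕ) :
    matchSeq n p = univ.image (matchPair n p) := by
  induction n with
  | zero => simp [matchSeq]
  | succ n ih =>
    rw [matchSeq, ih, Fin.univ_castSuccEmb, cons_eq_insert, image_insert, map_eq_image,
      image_image, image_image, insert_eq, union_comm, matchPair_last]
    congr 2
    ext1 i
    simp [Prod.map]

lemma matchPair_snd_le {n : ℕ} (p : Fin n → ℕ) (i : Fin n) : (matchPair n p i).2 ≤ 2 * n := by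
  cases n with
  | zero => exact i.elim0
  | succ n =>
    induction i using Fin.lastCases with
    | last => simp
    | cast i =>
      have hbump := bump_le_add_one (p (Fin.last n)) (matchPair n (fun i => p i.castSucc) i).2
      have hle := matchPair_snd_le (fun i => p i.castSucc) i
      simp only [matchPair_castSucc, Prod.map_snd]
      omega

lemma strictMono_matchPair_snd {n : ℕ} (p : Fin n → ℕ) :
    StrictMono fun i => (matchPair n p i).2 := by
  induction n with
  | zero => exact fun i => i.elim0
  | succ n ih =>
    intro i j hij
    obtain ⟨i, rfl⟩ := Fin.eq_castSucc_of_ne_last (hij.trans_le j.le_last).ne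
    induction j using Fin.lastCases with
    | last =>
      have hbump := bump_le_add_one (p (Fin.last n)) (matchPair n (fun i => p i.castSucc) i).2
      have hle := matchPair_snd_le (fun i => p i.castSucc) i
      simp only [matchPair_castSucc, matchPair_last, Prod.map_snd]
      omega
    | cast j =>
      simpa [bump_lt_bump_iff] using ih (fun i => p i.castSucc) (Fin.castSucc_lt_castSucc_iff.1 hij)

lemma matchPair_fst_succ_lt_iff {n : ℕ} (p : Fin (n + 1) → ℕ) (i : Fin n) :
    (matchPair (n + 1) p i.succ).1 < (matchPair (n + 1) p i.castSucc).1 ↔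
      p i.succ ≤ p i.castSucc := by
  induction n with
  | zero => exact i.elim0
  | succ n ih =>
    induction i using Fin.lastCases with
    | last =>
      simp only [Fin.succ_last, Nat.succ_eq_add_one, matchPair_last, matchPair_castSucc,
        Prod.map_fst, bump]
      split_ifs <;> omega
    | cast i =>
      rw [Fin.succ_castSucc, matchPair_castSucc, matchPair_castSucc, Prod.map_fst, Prod.map_fst,
        bump_lt_bump_iff]
      exact ih (fun i => p i.castSucc) i

lemma matchPair_fst_lt_iff {n : ℕ} (p : Fin n → ℕ) {i j : Fin n} (hij : i ⋖ j) :
    (matchPair n p j).1 < (matchPair n p i).1 ↔ p j ≤ p i := by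
  cases n with
  | zero => exact i.elim0
  | succ n =>
    obtain ⟨k, rfl⟩ := Fin.eq_succ_of_ne_zero (Fin.ne_zero_of_lt hij.lt)
    obtain rfl : i = k.castSucc := by
      ext
      simpa [Nat.covBy_iff_add_one_eq] using hij
    exact matchPair_fst_succ_lt_iff p k

lemma eq_of_range_prodMk_eq {ι α β : Type*} [LinearOrder ι] [WellFoundedLT ι] [Preorder β]
    {f f' : ι → α} {g g' : ι → β} (hg : StrictMono g) (hg' : StrictMono g')
    (h : Set.range (fun i => (f i, g i)) = Set.range fun i => (f' i, g' i)) : f = f' := by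
  have hgg' : g = g' := (hg.range_inj hg').1 <| by
    simpa [← Set.range_comp, Function.comp_def] using congrArg (Prod.snd '' ·) h
  subst hgg'
  funext i
  obtain ⟨k, hk⟩ := h ▸ Set.mem_range_self i
  obtain ⟨hf, hgk⟩ := Prod.mk.inj hk
  rw [← hf, hg.injective hgk]

lemma IsMinWord.eq_matchPair_fst {n : ℕ} {p w : Fin n → ℕ} (hw : IsMinWord n (matchSeq n p) w) :
    w = fun i => (matchPair n p i).1 := by
  obtain ⟨b, hb, -, hM⟩ := hw
  refine eq_of_range_prodMk_eq hb (strictMono_matchPair_snd p) ?_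
  rw [matchSeq_eq_image_matchPair] at hM
  simpa using congrArg (fun M : Finset (ℕ × ℕ) => (M : Set (ℕ × ℕ))) hM.symm

lemma IsMinWord.descentFinset_eq {n : ℕ} {p w : Fin n → ℕ} (hw : IsMinWord n (matchSeq n p) w) :
    descentFinset w = weakDescentFinset p := by
  rw [hw.eq_matchPair_fst]
  exact descentFinset_eq_weakDescentFinset fun _ _ => matchPair_fst_lt_iff p

end MinWord

namespace DyckPath

variable {n : ℕ} (P : DyckPath n)

lemma ht_add_one (i : Fin (2 * n)) :
    P.ht ((i : ℤ) - n + 1) = P.ht ((i : ℤ) - n) + if P.step i = true then 1 else -1 := by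
  have hcard (c : Bool) : (univ.filter fun k => k ≤ i ∧ P.step k = c).card =
      (univ.filter fun k => k < i ∧ P.step k = c).card + if P.step i = c then 1 else 0 := by
    rw [← filter_filter, ← filter_filter, filter_ge_eq_Iic, filter_gt_eq_Iio, ← Iio_insert,
      filter_insert]
    split_ifs <;> simp
  simp only [ht, sub_add_cancel, sub_add_eq_add_sub, Int.lt_add_one_iff, Nat.cast_le, Nat.cast_lt,
    Fin.val_fin_le, Fin.val_fin_lt, hcard]
  cases P.step i <;> grind

lemma ht_add_one_of_outside {x : ℤ} (hx : x < -n ∨ (n : ℤ) ≤ x) : P.ht (x + 1) = P.ht x := by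
  have hiff (k : Fin (2 * n)) : ((k : ℕ) : ℤ) < x + 1 + n ↔ ((k : ℕ) : ℤ) < x + n := by omega
  simp only [ht, hiff]

end DyckPath

section DisCols

/-- The columns from which a step of the lower height function `lo` goes down while that of the
upper height function `up` goes up. These are the steps counted by `DyckTiling.dis`, for boundaries
that need not be Dyck paths. -/
def disCols (lo up : ℤ → ℤ) : Set ℤ := {x | lo (x + 1) < lo x ∧ up x < up (x + 1)}

variable {n : ℕ} (T : DyckTiling n)

lemma DyckTiling.disCols_eq_image :
    disCols T.lower.ht T.upper.ht = (fun i : Fin (2 * n) => (i : ℤ) - n) ''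
      (univ.filter fun i : Fin (2 * n) => T.lower.step i = false ∧ T.upper.step i = true) := by
  have hmem (i : Fin (2 * n)) : (i : ℤ) - n ∈ disCols T.lower.ht T.upper.ht ↔
      T.lower.step i = false ∧ T.upper.step i = true := by
    rw [disCols, Set.mem_ofPred_eq, T.lower.ht_add_one, T.upper.ht_add_one]
    cases T.lower.step i <;> cases T.upper.step i <;> simp
  ext x
  simp only [coe_filter_univ, Set.mem_image, Set.mem_ofPred_eq]
  constructor
  · intro hx
    have hin : ¬(x < -n ∨ (n : ℤ) ≤ x) := fun hout =>
      hx.1.ne (T.lower.ht_add_one_of_outside hout)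
    obtain ⟨i, rfl⟩ : ∃ i : Fin (2 * n), (i : ℤ) - n = x :=
      ⟨⟨(x + n).toNat, by omega⟩, by simp only; omega⟩
    exact ⟨i, (hmem i).1 hx, rfl⟩
  · rintro ⟨i, hi, rfl⟩
    exact (hmem i).2 hi

lemma DyckTiling.finite_disCols : (disCols T.lower.ht T.upper.ht).Finite := by
  rw [T.disCols_eq_image]
  exact (finite_toSet _).image _

lemma DyckTiling.ncard_disCols : (disCols T.lower.ht T.upper.ht).ncard = T.dis := by
  have hinj : Function.Injective fun i : Fin (2 * n) => (i : ℤ) - n := fun i j h => by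
    simpa [Fin.ext_iff] using h
  rw [T.disCols_eq_image, Set.ncard_image_of_injective _ hinj, Set.ncard_coe_finset, dis]

end DisCols

section SpreadHeights

variable {n : ℕ} (P M : DyckPath n) {s x : ℤ}

lemma spreadHt_of_lt (h : x < s) : spreadHt P s x = P.ht (x + 1) := if_pos h

@[simp]
lemma spreadHt_self : spreadHt P s s = P.ht s + 1 := by simp [spreadHt]

lemma spreadHt_of_gt (h : s < x) : spreadHt P s x = P.ht (x - 1) := by
  simp [spreadHt, h.not_gt, h.ne']

@[simp]
lemma spreadHt_sub_one_self : spreadHt P s (s - 1) = P.ht s := by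
  simp [spreadHt_of_lt P (sub_one_lt s)]

@[simp]
lemma spreadHt_self_add_one : spreadHt P s (s + 1) = P.ht s := by
  simp [spreadHt_of_gt P (lt_add_one s)]

/-- Where the spread at column `s` moves the step starting from column `x`. -/
def spreadStep (s x : ℤ) : ℤ := if x < s then x - 1 else x + 1

lemma spreadStep_injective (s : ℤ) : Function.Injective (spreadStep s) := fun x y h => by
  unfold spreadStep at h
  split_ifs at h <;> omega

lemma range_spreadStep (s : ℤ) : Set.range (spreadStep s) = {s - 1, s}ᶜ := by
  ext y
  simp only [Set.mem_range, Set.mem_compl_iff, Set.mem_insert_iff, Set.mem_singleton_iff, not_or,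
    spreadStep]
  constructor
  · rintro ⟨x, rfl⟩
    split_ifs <;> omega
  · rintro ⟨hy, hys⟩
    rcases lt_or_gt_of_ne hys with h | h
    · exact ⟨y + 1, by rw [if_pos (by omega)]; omega⟩
    · exact ⟨y - 1, by rw [if_neg (by omega)]; omega⟩

lemma spreadHt_spreadStep : spreadHt P s (spreadStep s x) = P.ht x := by
  unfold spreadStep
  split_ifs
  · simp [spreadHt_of_lt P (by omega : x - 1 < s)]
  · simp [spreadHt_of_gt P (by omega : s < x + 1)]

lemma spreadHt_spreadStep_add_one : spreadHt P s (spreadStep s x + 1) = P.ht (x + 1) := by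
  unfold spreadStep
  split_ifs with h
  · simp [spreadHt_of_lt P h]
  · simp [spreadHt_of_gt P (by omega : s < x + 1 + 1)]

lemma disCols_spreadHt :
    disCols (spreadHt P s) (spreadHt M s) = spreadStep s '' disCols P.ht M.ht := by
  have hpre : spreadStep s ⁻¹' disCols (spreadHt P s) (spreadHt M s) = disCols P.ht M.ht := by
    ext x
    simp [disCols, spreadHt_spreadStep, spreadHt_spreadStep_add_one]
  rw [← hpre, Set.image_preimage_eq_of_subset]
  rw [range_spreadStep, Set.subset_compl_comm]
  rintro _ (rfl | rfl) <;> simp [disCols]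

/-- The height function obtained from `h` by adding one-box tiles on top of every column strictly
between `s` and `Q`. -/
def ribbonHt (h : ℤ → ℤ) (s Q x : ℤ) : ℤ := if s < x ∧ x < Q then h x + 2 else h x

lemma ribbonHt_of_le {h : ℤ → ℤ} {Q : ℤ} (hQ : Q ≤ s) : ribbonHt h s Q = h := by
  funext x
  exact if_neg (by omega)

lemma disCols_ribbonHt {lo h : ℤ → ℤ} {Q : ℤ} (hsQ : s + 1 < Q) (hlos : lo (s + 1) < lo s)
    (hhs : h s ≤ h (s + 1) + 1) (hloQ : lo (Q - 1) ≤ lo Q) :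
    disCols lo (ribbonHt h s Q) = insert s (disCols lo h) := by
  ext x
  simp only [disCols, ribbonHt, Set.mem_insert_iff, Set.mem_ofPred_eq]
  obtain rfl | hxs := eq_or_ne x s
  · simp only [true_or, iff_true]
    split_ifs <;> omega
  obtain rfl | hxQ := eq_or_ne x (Q - 1)
  · rw [sub_add_cancel]
    omega
  · split_ifs <;> omega

end SpreadHeights

section SpreadTiles

variable {s : ℤ} {t : Finset (ℤ × ℤ)} {ts : Finset (Finset (ℤ × ℤ))}

lemma mem_spreadTile_of_le {q : ℤ × ℤ} (hq : q ∈ t) (h : q.1 ≤ s) :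
    (q.1 - 1, q.2) ∈ spreadTile s t :=
  mem_union_left _ <| mem_union_left _ <| mem_image_of_mem _ <| mem_filter.2 ⟨hq, h⟩

lemma mem_spreadTile_of_ge {q : ℤ × ℤ} (hq : q ∈ t) (h : s ≤ q.1) :
    (q.1 + 1, q.2) ∈ spreadTile s t :=
  mem_union_right _ <| mem_image_of_mem _ <| mem_filter.2 ⟨hq, h⟩

lemma spreadTile_ne_singleton_self (y : ℤ) : spreadTile s t ≠ {(s, y)} := by
  intro h
  have hcol : ∃ q ∈ t, q.1 = s := by
    have hmem : (s, y) ∈ spreadTile s t := by simp [h]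
    simp only [spreadTile, mem_union, mem_image, mem_filter, Prod.mk.injEq] at hmem
    rcases hmem with (⟨q, ⟨_, _⟩, _, _⟩ | ⟨q, ⟨hq, hqs⟩, _, _⟩) | ⟨q, ⟨_, _⟩, _, _⟩
    · omega
    · exact ⟨q, hq, hqs⟩
    · omega
  obtain ⟨q, hq, hqs⟩ := hcol
  have hleft := mem_spreadTile_of_le hq hqs.le
  rw [h, mem_singleton, Prod.mk.injEq] at hleft
  omega

lemma spreadTile_eq_singleton_iff {c y : ℤ} (h : s < c) :
    spreadTile s t = {(c + 1, y)} ↔ t = {(c, y)} := by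
  refine ⟨fun hst => eq_singleton_iff_nonempty_unique_mem.2 ⟨?_, fun q hq => ?_⟩, ?_⟩
  · rw [nonempty_iff_ne_empty]
    rintro rfl
    simp [spreadTile] at hst
  · rcases le_or_gt q.1 s with hqs | hqs
    · have hleft := mem_spreadTile_of_le hq hqs
      rw [hst, mem_singleton, Prod.mk.injEq] at hleft
      omega
    · have hright := mem_spreadTile_of_ge hq hqs.le
      rw [hst, mem_singleton, Prod.mk.injEq] at hright
      exact Prod.ext (by simpa using hright.1) hright.2
  · rintro rfl
    simp [spreadTile, filter_singleton, h.not_ge, h.ne', h.le]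

lemma singleton_mem_spreadTiles_iff {c y : ℤ} (h : s < c) :
    {(c + 1, y)} ∈ spreadTiles s ts ↔ {(c, y)} ∈ ts := by
  simp [spreadTiles, spreadTile_eq_singleton_iff h]

variable {n : ℕ} (P : DyckPath n)

lemma eligibleCol_spread_self : EligibleCol (spreadHt P s) (spreadTiles s ts) s :=
  ⟨by simp, by simp [spreadTiles, spreadTile_ne_singleton_self]⟩

lemma not_eligibleCol_spread_self_add_one :
    ¬EligibleCol (spreadHt P s) (spreadTiles s ts) (s + 1) := fun h => by
  have hup := h.1
  simp only [spreadHt_self_add_one, add_sub_cancel_right, spreadHt_self] at hup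
  omega

lemma eligibleCol_spread_add_one_iff {c : ℤ} (h : s < c) :
    EligibleCol (spreadHt P s) (spreadTiles s ts) (c + 1) ↔ EligibleCol P.ht ts c := by
  unfold EligibleCol
  rw [singleton_mem_spreadTiles_iff h, spreadHt_of_gt P (by omega : s < c + 1),
    spreadHt_of_gt P (by omega : s < c + 1 - 1), add_sub_cancel_right]

lemma EligibleCol.of_spread {Q : ℤ} (h : EligibleCol (spreadHt P s) (spreadTiles s ts) Q)
    (hQ : s < Q) : s + 1 < Q ∧ EligibleCol P.ht ts (Q - 1) := by
  have hne : Q ≠ s + 1 := by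
    rintro rfl
    exact not_eligibleCol_spread_self_add_one P h
  refine ⟨by omega, (eligibleCol_spread_add_one_iff P (s := s) (by omega)).1 ?_⟩
  rwa [sub_add_cancel]

end SpreadTiles

namespace RibbonGrowRel

variable {n : ℕ} {T : DyckTiling n} {s : ℤ} {T' : DyckTiling (n + 1)}

lemma lower_ht_lt (h : RibbonGrowRel T s T') : T'.lower.ht (s - 1) < T'.lower.ht s := by
  simp [h.1]

lemma specialCol (h : RibbonGrowRel T s T') : SpecialCol T' s := by
  obtain ⟨-, Q, hQ, hmax, hup, htiles⟩ := h
  have hs : EligibleCol (spreadHt T.upper s) (spreadTiles s T.tiles) s :=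
    eligibleCol_spread_self T.upper
  refine ⟨⟨by simp [hup], ?_⟩, fun c ⟨hcup, hctile⟩ => ?_⟩
  · simpa [htiles, hup] using hs.2
  · by_contra! hsc
    rw [htiles, mem_union, not_or] at hctile
    rcases lt_trichotomy c Q with hcQ | rfl | hcQ
    · refine hctile.2 (mem_image.2 ⟨c, mem_Ioo.2 ⟨hsc, hcQ⟩, ?_⟩)
      simp [hup, hsc, hcQ]
    · obtain ⟨hsc', -⟩ := hQ.of_spread _ hsc
      have hupQ := hQ.1
      rw [hup, hup, if_neg (by omega), if_pos (by omega)] at hcup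
      omega
    · rw [hup c, if_neg (by omega)] at hcup hctile
      rw [hup, if_neg (by omega)] at hcup
      exact (hmax c ⟨hcup, hctile.1⟩).not_gt hcQ

lemma dis_eq (h : RibbonGrowRel T s T') (hs : ∀ c, EligibleCol T.upper.ht T.tiles c → c ≤ s) :
    T'.dis = T.dis := by
  obtain ⟨hlow, Q, hQ, -, hup, -⟩ := h
  have hQs : Q ≤ s := by
    by_contra! hsQ
    obtain ⟨hlt, hel⟩ := hQ.of_spread _ hsQ
    have hle := hs _ hel
    omega
  have hup' : T'.upper.ht = spreadHt T.upper s := (funext hup).trans (ribbonHt_of_le hQs)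
  rw [← T'.ncard_disCols, ← T.ncard_disCols, funext hlow, hup', disCols_spreadHt,
    Set.ncard_image_of_injective _ (spreadStep_injective s)]

lemma dis_eq_add_one (h : RibbonGrowRel T s T') {c : ℤ} (hc : SpecialCol T c)
    (hlow_c : T.lower.ht (c - 1) ≤ T.lower.ht c) (hsc : s < c) : T'.dis = T.dis + 1 := by
  obtain ⟨hlow, Q, hQ, hmax, hup, -⟩ := h
  obtain rfl : Q = c + 1 := by
    have hle : c + 1 ≤ Q := hmax _ ((eligibleCol_spread_add_one_iff _ hsc).2 hc.1)
    have hge : Q - 1 ≤ c := hc.2 _ (hQ.of_spread _ (by omega)).2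
    omega
  have hlow_ribbon : spreadHt T.lower s (c + 1 - 1) ≤ spreadHt T.lower s (c + 1) := by
    rw [spreadHt_of_gt _ (by omega), spreadHt_of_gt _ (by omega)]
    simpa using hlow_c
  have hdis : disCols T'.lower.ht T'.upper.ht =
      insert s (disCols (spreadHt T.lower s) (spreadHt T.upper s)) := by
    have hup' : T'.upper.ht = ribbonHt (spreadHt T.upper s) s (c + 1) := funext hup
    rw [funext hlow, hup', disCols_ribbonHt (by omega) (by simp) (by simp) hlow_ribbon]
  have hs : s ∉ disCols (spreadHt T.lower s) (spreadHt T.upper s) := by simp [disCols]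
  rw [← T'.ncard_disCols, ← T.ncard_disCols, hdis]
  rw [disCols_spreadHt] at hs ⊢
  rw [Set.ncard_insert_of_notMem hs (T.finite_disCols.image _),
    Set.ncard_image_of_injective _ (spreadStep_injective s)]

end RibbonGrowRel

namespace IsDTR

lemma specialCol {n : ℕ} {p : Fin (n + 1) → ℕ} {T : DyckTiling (n + 1)} (h : IsDTR (n + 1) p T) :
    SpecialCol T ((p (Fin.last n) : ℤ) - n) := by
  cases h with
  | cons _ _ _ _ _ hgrow => exact hgrow.specialCol

lemma lower_ht_lt {n : ℕ} {p : Fin (n + 1) → ℕ} {T : DyckTiling (n + 1)} (h : IsDTR (n + 1) p T) :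
    T.lower.ht ((p (Fin.last n) : ℤ) - n - 1) < T.lower.ht ((p (Fin.last n) : ℤ) - n) := by
  cases h with
  | cons _ _ _ _ _ hgrow => exact hgrow.lower_ht_lt

lemma dis_eq {n : ℕ} {p : Fin n → ℕ} {T : DyckTiling n} (h : IsDTR n p T) :
    T.dis = (weakDescentFinset p).card := by
  induction h with
  | nil p T => simp [DyckTiling.dis, weakDescentFinset]
  | cons n p T T' hT hgrow ih =>
    cases n with
    | zero =>
      have hnone (c : ℤ) : ¬EligibleCol T.upper.ht T.tiles c := fun hc => by
        simpa [DyckPath.ht] using hc.1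
      rw [hgrow.dis_eq fun c hc => (hnone c hc).elim, ih, card_weakDescentFinset]
      simp [weakDescentFinset]
    | succ n =>
      rw [card_weakDescentFinset_castSucc, ← ih]
      split_ifs with hdesc
      · exact hgrow.dis_eq_add_one hT.specialCol hT.lower_ht_lt.le (by push_cast; omega)
      · exact hgrow.dis_eq fun c hc => (hT.specialCol.2 c hc).trans (by push_cast; omega)

end IsDTR

theorem descents_eq_minword_descents_general {n : ℕ} {l r : Fin n → ℕ} (hlr : ∀ i, l i ≤ r i)
    {σ : Equiv.Perm (Fin n)} (hσ : IsStandardization l σ)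
    {w : Fin n → ℕ} (hw : IsMinWord n (matchSeq n (growthSeq l r)) w) :
    descentFinset (permWord σ) = descentFinset w ∧
    ∀ T : DyckTiling n, IsDTR n (growthSeq l r) T → T.dis = (descentFinset w).card := by
  rw [hw.descentFinset_eq]
  exact ⟨hσ.descentFinset_permWord hlr, fun _ hT => hT.dis_eq⟩

/-- If `(λ, σ)` is the labeled tree arising from `(p_1, …, p_n)`
(i.e. `p = seqOf C` for a natural chord labeling `C` of `λ` whose standardized
left-endpoint word is `σ`), then `DES(σ) = DES(min-word(match(p)))`; in particular
`dis(DTR(p)) = des(min-word(match(p)))`. -/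
theorem descents_eq_minword_descents (n : ℕ) (lam : DyckPath n) (C : ChordLabeling lam)
    (σ : Equiv.Perm (Fin n)) (hσ : IsStandardization C.l σ)
    (w : Fin n → ℕ) (hw : IsMinWord n (matchSeq n (seqOf C)) w) :
    descentFinset (permWord σ) = descentFinset w ∧
    ∀ T : DyckTiling n, IsDTR n (seqOf C) T → T.dis = (descentFinset w).card :=
  descents_eq_minword_descents_general (fun i => (C.chord i).1.le) hσ hw

end
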